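/- Let P be a binary partial group and BP_n ⊆ P^n the set of words all of whose full parenthesizations yield defined and equal products. If w = (a_1, ..., a_n) ∈ BP_n, then the concatenated word w†w = (a_n†, ..., a_1†, a_1, ..., a_n) lies in BP_{2n}, and its common product is 1. -/

import Mathlib

/-- A unital partial magma: a partially defined binary operation (encoded via
`Option`) with a two-sided unit. -/
structure UnitalPartialMagma (P : Type*) where
  mul : P → P → Option P
  one : P
  mul_one : ∀ a, mul a one = some a
  one_mul : ∀ a, mul one a = some a

/-- A binary partial group: a unital partial magma where each element has an
inverse `inv a` with: `a*b` defined implies `(inv a)*(a*b)` defined and equal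
to `b`, and `b*a` defined implies `(b*a)*(inv a)` defined and equal to `b`. -/
structure BinaryPartialGroup (P : Type*) extends UnitalPartialMagma P where
  inv : P → P
  inv_left : ∀ a b c, mul a b = some c → mul (inv a) c = some b
  inv_right : ∀ a b c, mul b a = some c → mul c (inv a) = some b

/-- Full parenthesizations of words, as binary trees. -/
inductive PTree : Type where
  | leaf : PTree
  | node : PTree → PTree → PTree

/-- The number of letters a parenthesization applies to. -/
def PTree.size : PTree → Nat
  | .leaf => 1
  | .node l r => l.size + r.size

/-- The mirrored parenthesization. -/
def PTree.mirror : PTree → PTree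
  | .leaf => .leaf
  | .node l r => .node r.mirror l.mirror

/-- The partial iterated multiplication of a word determined by a full
parenthesization. -/
def evalTree {P : Type*} (M : UnitalPartialMagma P) : PTree → List P → Option P
  | .leaf, [a] => some a
  | .leaf, _ => none
  | .node l r, w =>
      (evalTree M l (w.take l.size)).bind fun x =>
        (evalTree M r (w.drop l.size)).bind fun y => M.mul x y

/-- `IsProd M w a` says that every full parenthesization of the word `w` gives a
defined iterated product, and all these products equal `a`; the empty word has
product the unit.  Thus `w ∈ BP_n` iff `∃ a, IsProd M w a`. -/
def IsProd {P : Type*} (M : UnitalPartialMagma P) (w : List P) (a : P) : Prop :=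
  (w = [] → a = M.one) ∧ ∀ t : PTree, t.size = w.length → evalTree M t w = some a

/-! By cancellation, every infix of a word `w ∈ BP_n` again has a well-defined product. Write
`q i j` for the product of the letters of `w` in positions `i, ..., j - 1` (counted from `0`) when
`i ≤ j`, and for the inverse of `q j i` otherwise. The two inverse laws let one permute `i`, `j`,
`k` in `q i j * q j k = q i k`, so this identity, clear for `i ≤ j ≤ k`, holds for all `i`, `j`,
`k`. Hence the word read along any path of indices has a well-defined product, namely `q` of the
two endpoints; and `w†w` is read along the closed path `n, ..., 1, 0, 1, ..., n`. -/

section Extract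

variable {α : Type*}

theorem extract_append_extract (w : List α) {i j k : ℕ} (hij : i ≤ j) (hjk : j ≤ k) :
    w.extract i j ++ w.extract j k = w.extract i k := by
  obtain ⟨d, rfl⟩ := Nat.exists_eq_add_of_le hij
  obtain ⟨e, rfl⟩ := Nat.exists_eq_add_of_le hjk
  have hlen : i + d + e - i = d + e := by omega
  rw [List.extract_eq_take_drop, List.extract_eq_take_drop, List.extract_eq_take_drop, hlen,
    Nat.add_sub_cancel_left, Nat.add_sub_cancel_left, List.take_add, List.drop_drop]

theorem extract_succ_eq_singleton {w : List α} {i : ℕ} (hi : i < w.length) :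
    w.extract i (i + 1) = [w[i]] := by
  rw [List.extract_eq_take_drop, Nat.add_sub_cancel_left, List.drop_eq_getElem_cons hi,
    List.take_succ_cons, List.take_zero]

end Extract

section Eval

theorem PTree.size_pos : ∀ t : PTree, 0 < t.size
  | .leaf => Nat.one_pos
  | .node l _ => Nat.add_pos_left l.size_pos _

theorem PTree.exists_size_eq {n : ℕ} (hn : 0 < n) : ∃ t : PTree, t.size = n := by
  induction n, hn using Nat.le_induction with
  | base => exact ⟨.leaf, rfl⟩
  | succ n _ ih =>
    obtain ⟨t, rfl⟩ := ih
    exact ⟨.node t .leaf, rfl⟩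

variable {P : Type*} {M : UnitalPartialMagma P} {u v w : List P} {a b : P}

theorem evalTree_node_append (r : PTree) {l : PTree} (hl : l.size = u.length) :
    evalTree M (.node l r) (u ++ v) =
      (evalTree M l u).bind fun x => (evalTree M r v).bind fun y => M.mul x y := by
  simp [evalTree, hl]

variable (M) in
theorem isProd_nil : IsProd M [] M.one :=
  ⟨fun _ => rfl, fun t ht => absurd ht t.size_pos.ne'⟩

theorem IsProd.eq_of_singleton (h : IsProd M [a] b) : a = b := by
  simpa [evalTree] using h.2 .leaf rfl

theorem IsProd.unique (ha : IsProd M w a) (hb : IsProd M w b) : a = b := by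
  by_cases hw : w = []
  · rw [ha.1 hw, hb.1 hw]
  · obtain ⟨t, ht⟩ := PTree.exists_size_eq (List.length_pos_of_ne_nil hw)
    exact Option.some_injective _ ((ha.2 t ht).symm.trans (hb.2 t ht))

theorem IsProd.exists_evalTree_of_append (h : IsProd M (u ++ v) a) {s t : PTree}
    (hs : s.size = u.length) (ht : t.size = v.length) :
    ∃ x y, evalTree M s u = some x ∧ evalTree M t v = some y ∧ M.mul x y = some a := by
  have heval := h.2 (.node s t) (by simp [PTree.size, hs, ht])
  rw [evalTree_node_append t hs] at heval
  simpa [Option.bind_eq_some_iff] using heval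

end Eval

section Paths

variable {P ι : Type*}

/-- A family `q` of elements indexed by pairs of vertices is a cocycle if the composite of the
steps from `i` to `j` and from `j` to `k` is defined and is the step from `i` to `k`. -/
def IsCocycle (M : UnitalPartialMagma P) (q : ι → ι → P) : Prop :=
  ∀ i j k, M.mul (q i j) (q j k) = some (q i k)

/-- `IsPath q i w j` says that `w` is the word of steps `q i k₁, q k₁ k₂, ..., q kₘ j` read along
some path of vertices from `i` to `j`. -/
inductive IsPath (q : ι → ι → P) : ι → List P → ι → Prop
  | nil (i : ι) : IsPath q i [] i
  | cons {j k : ι} {w : List P} (i : ι) : IsPath q j w k → IsPath q i (q i j :: w) k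

namespace IsPath

variable {q : ι → ι → P} {i j k : ι} {u v w : List P}

theorem singleton (q : ι → ι → P) (i j : ι) : IsPath q i [q i j] j :=
  .cons i (.nil j)

theorem append (hu : IsPath q i u j) (hv : IsPath q j v k) : IsPath q i (u ++ v) k := by
  induction hu with
  | nil => exact hv
  | cons i _ ih => exact .cons i (ih hv)

theorem exists_of_append (h : IsPath q i (u ++ v) k) : ∃ j, IsPath q i u j ∧ IsPath q j v k := by
  induction u generalizing i with
  | nil => exact ⟨i, .nil i, h⟩
  | cons a u ih =>
    cases h with
    | cons i h =>
      obtain ⟨j, hu, hv⟩ := ih h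
      exact ⟨j, .cons i hu, hv⟩

theorem reverse_map {f : P → P} (hf : ∀ i j, f (q i j) = q j i) (h : IsPath q i w j) :
    IsPath q j (w.map f).reverse i := by
  induction h with
  | nil i => exact .nil i
  | @cons j k w i _ ih =>
    rw [List.map_cons, List.reverse_cons, hf]
    exact ih.append (singleton q j i)

theorem of_getElem {q : ℕ → ℕ → P} (hq : ∀ i (hi : i < w.length), w[i] = q i (i + 1)) :
    IsPath q 0 w w.length := by
  suffices ∀ n ≤ w.length, IsPath q 0 (w.take n) n by simpa using this w.length le_rfl
  intro n hn
  induction n with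
  | zero => exact .nil 0
  | succ n ih =>
    rw [List.take_succ_eq_append_getElem hn, hq n hn]
    exact (ih (Nat.le_of_succ_le hn)).append (singleton q n (n + 1))

theorem evalTree_eq {M : UnitalPartialMagma P} (hq : IsCocycle M q) {t : PTree}
    (h : IsPath q i w j) (ht : t.size = w.length) : evalTree M t w = some (q i j) := by
  induction t generalizing i j w with
  | leaf =>
    obtain ⟨a, rfl⟩ := List.length_eq_one_iff.mp ht.symm
    cases h with
    | cons i h => cases h; rfl
  | node l r ihl ihr =>
    rw [PTree.size] at ht
    have hl : l.size = (w.take l.size).length := by rw [List.length_take]; omega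
    have hr : r.size = (w.drop l.size).length := by rw [List.length_drop]; omega
    rw [← List.take_append_drop l.size w] at h
    obtain ⟨k, hleft, hright⟩ := h.exists_of_append
    rw [evalTree, ihl hleft hl, ihr hright hr]
    exact hq i k j

end IsPath

end Paths

namespace BinaryPartialGroup

section Cancellation

variable {P : Type*} {G : BinaryPartialGroup P} {a a' b b' c : P}

theorem mul_left_cancel (h : G.mul a b = some c) (h' : G.mul a b' = some c) : b = b' :=
  Option.some_injective _ ((G.inv_left _ _ _ h).symm.trans (G.inv_left _ _ _ h'))

theorem mul_right_cancel (h : G.mul a b = some c) (h' : G.mul a' b = some c) : a = a' :=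
  Option.some_injective _ ((G.inv_right _ _ _ h).symm.trans (G.inv_right _ _ _ h'))

theorem eq_one_of_mul_self (h : G.mul a a = some a) : a = G.one :=
  mul_left_cancel h (G.mul_one a)

theorem inv_eq_of_mul_eq_one (h : G.mul a b = some G.one) : G.inv a = b :=
  Option.some_injective _ ((G.mul_one _).symm.trans (G.inv_left _ _ _ h))

theorem mul_inv_self (G : BinaryPartialGroup P) (a : P) : G.mul a (G.inv a) = some G.one :=
  G.inv_right _ _ _ (G.one_mul a)

theorem inv_mul_self (G : BinaryPartialGroup P) (a : P) : G.mul (G.inv a) a = some G.one :=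
  G.inv_left _ _ _ (G.mul_one a)

theorem inv_inv (G : BinaryPartialGroup P) (a : P) : G.inv (G.inv a) = a :=
  inv_eq_of_mul_eq_one (G.inv_mul_self a)

theorem inv_one (G : BinaryPartialGroup P) : G.inv G.one = G.one :=
  inv_eq_of_mul_eq_one (G.one_mul G.one)

end Cancellation

section Infixes

variable {P : Type*} {G : BinaryPartialGroup P} {u v w : List P} {a : P}

theorem exists_isProd_of_append (h : IsProd G.toUnitalPartialMagma (u ++ v) a) :
    ∃ x y, IsProd G.toUnitalPartialMagma u x ∧ IsProd G.toUnitalPartialMagma v y ∧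
      G.mul x y = some a := by
  by_cases hu : u = []
  · subst hu
    exact ⟨G.one, a, isProd_nil _, h, G.one_mul a⟩
  by_cases hv : v = []
  · subst hv
    exact ⟨a, G.one, by simpa using h, isProd_nil _, G.mul_one a⟩
  obtain ⟨s, hs⟩ := PTree.exists_size_eq (List.length_pos_of_ne_nil hu)
  obtain ⟨t, ht⟩ := PTree.exists_size_eq (List.length_pos_of_ne_nil hv)
  obtain ⟨x, y, hx, hy, hxy⟩ := h.exists_evalTree_of_append hs ht
  refine ⟨x, y, ⟨fun hnil => absurd hnil hu, fun s' hs' => ?_⟩,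
    ⟨fun hnil => absurd hnil hv, fun t' ht' => ?_⟩, hxy⟩
  · obtain ⟨x', y', hx', hy', hxy'⟩ := h.exists_evalTree_of_append hs' ht
    obtain rfl : y = y' := Option.some_injective _ (hy.symm.trans hy')
    rw [hx', mul_right_cancel hxy hxy']
  · obtain ⟨x', y', hx', hy', hxy'⟩ := h.exists_evalTree_of_append hs ht'
    obtain rfl : x = x' := Option.some_injective _ (hx.symm.trans hx')
    rw [hy', mul_left_cancel hxy hxy']

theorem exists_isProd_of_infix (h : IsProd G.toUnitalPartialMagma w a) (hu : u <:+: w) :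
    ∃ x, IsProd G.toUnitalPartialMagma u x := by
  obtain ⟨s, t, rfl⟩ := hu
  obtain ⟨_, _, hsu, -, -⟩ := exists_isProd_of_append h
  obtain ⟨_, x, -, hx, -⟩ := exists_isProd_of_append hsu
  exact ⟨x, hx⟩

end Infixes

section Cocycles

variable {P ι : Type*} {G : BinaryPartialGroup P} {q : ι → ι → P}

theorem isCocycle_of_le [LinearOrder ι] (hinv : ∀ i j, G.inv (q i j) = q j i)
    (hle : ∀ i j k, i ≤ j → j ≤ k → G.mul (q i j) (q j k) = some (q i k)) :
    IsCocycle G.toUnitalPartialMagma q := by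
  have swap_left {i j k} (h : G.mul (q i j) (q j k) = some (q i k)) :
      G.mul (q j i) (q i k) = some (q j k) := hinv i j ▸ G.inv_left _ _ _ h
  have swap_right {i j k} (h : G.mul (q i j) (q j k) = some (q i k)) :
      G.mul (q i k) (q k j) = some (q i j) := hinv j k ▸ G.inv_right _ _ _ h
  have of_le_left {i j} (k) (hij : i ≤ j) : G.mul (q i j) (q j k) = some (q i k) := by
    rcases le_total j k with hjk | hkj
    · exact hle i j k hij hjk
    rcases le_total i k with hik | hki
    · exact swap_right (hle i k j hik hkj)
    · exact swap_right (swap_left (hle k i j hki hij))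
  intro i j k
  rcases le_total i j with hij | hji
  · exact of_le_left k hij
  · exact swap_left (of_le_left k hji)

theorem exists_isCocycle_extending [LinearOrder ι] {p : ι → ι → P}
    (hp : ∀ i j k, i ≤ j → j ≤ k → G.mul (p i j) (p j k) = some (p i k)) :
    ∃ q, IsCocycle G.toUnitalPartialMagma q ∧ ∀ i j, i ≤ j → q i j = p i j := by
  have p_self (i : ι) : p i i = G.one := eq_one_of_mul_self (hp i i i le_rfl le_rfl)
  let q (i j : ι) : P := if i ≤ j then p i j else G.inv (p j i)
  have q_of_le {i j} (hij : i ≤ j) : q i j = p i j := if_pos hij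
  have inv_q (i j : ι) : G.inv (q i j) = q j i := by
    rcases lt_trichotomy i j with hij | rfl | hji
    · simp [q, hij.le, hij.not_ge]
    · simp [q, p_self, G.inv_one]
    · simp [q, hji.le, hji.not_ge, G.inv_inv]
  refine ⟨q, isCocycle_of_le inv_q fun i j k hij hjk => ?_, fun _ _ => q_of_le⟩
  rw [q_of_le hij, q_of_le hjk, q_of_le (hij.trans hjk), hp i j k hij hjk]

end Cocycles

end BinaryPartialGroup

section Products

variable {P ι : Type*} {G : BinaryPartialGroup P} {q : ι → ι → P}

theorem IsCocycle.self_eq_one (hq : IsCocycle G.toUnitalPartialMagma q) (i : ι) :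
    q i i = G.one :=
  BinaryPartialGroup.eq_one_of_mul_self (hq i i i)

theorem IsCocycle.inv_eq_swap (hq : IsCocycle G.toUnitalPartialMagma q) (i j : ι) :
    G.inv (q i j) = q j i :=
  BinaryPartialGroup.inv_eq_of_mul_eq_one (hq.self_eq_one i ▸ hq i j i)

theorem IsPath.isProd {w : List P} {i j : ι} (hq : IsCocycle G.toUnitalPartialMagma q)
    (h : IsPath q i w j) : IsProd G.toUnitalPartialMagma w (q i j) := by
  refine ⟨?_, fun t ht => h.evalTree_eq hq ht⟩
  rintro rfl
  cases h
  exact hq.self_eq_one i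

theorem IsProd.exists_isCocycle_isPath {w : List P} {a : P}
    (h : IsProd G.toUnitalPartialMagma w a) :
    ∃ q : ℕ → ℕ → P, IsCocycle G.toUnitalPartialMagma q ∧ IsPath q 0 w w.length := by
  have extract_infix (i j : ℕ) : w.extract i j <:+: w :=
    (List.take_prefix _ _).isInfix.trans (List.drop_suffix i w).isInfix
  choose p hp using fun i j => G.exists_isProd_of_infix h (extract_infix i j)
  have p_mul (i j k : ℕ) (hij : i ≤ j) (hjk : j ≤ k) : G.mul (p i j) (p j k) = some (p i k) := by
    have hik := hp i k
    rw [← extract_append_extract w hij hjk] at hik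
    obtain ⟨x, y, hx, hy, hxy⟩ := G.exists_isProd_of_append hik
    rwa [hx.unique (hp i j), hy.unique (hp j k)] at hxy
  obtain ⟨q, hq, q_of_le⟩ := G.exists_isCocycle_extending p_mul
  refine ⟨q, hq, .of_getElem fun i hi => ?_⟩
  rw [q_of_le i (i + 1) i.le_succ]
  have hletter := hp i (i + 1)
  rw [extract_succ_eq_singleton hi] at hletter
  exact hletter.eq_of_singleton

end Products

/-- If `w ∈ BP_n`, then `w†w ∈ BP_{2n}` with common product `1`. -/
theorem stmt_14 {P : Type*} (G : BinaryPartialGroup P) (w : List P) (a : P)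
    (h : IsProd G.toUnitalPartialMagma w a) :
    IsProd G.toUnitalPartialMagma ((w.map G.inv).reverse ++ w) G.one := by
  obtain ⟨q, hq, hw⟩ := h.exists_isCocycle_isPath
  have hclosed : IsPath q w.length ((w.map G.inv).reverse ++ w) w.length :=
    (hw.reverse_map hq.inv_eq_swap).append hw
  exact hq.self_eq_one w.length ▸ hclosed.isProd hq
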